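/- For every *-periodic kneading sequence ν of exact period n, the associated upper kneading sequence A(ν) has exact period n (i.e., among the two periodic sequences ν₀ and ν₁ obtained from ν by replacing every * by 0 respectively by 1, the one whose internal address contains n has exact period n). -/

import Mathlib

/- Common definitions for formalizing "Admissibility of kneading sequences and
structure of Hubbard trees for quadratic polynomials" by Bruin–Schleicher. -/

namespace HubbardTrees

/-- The symbols `0`, `1`, `*` used for itineraries and kneading sequences. -/
inductive Sym : Type
  | zero : Sym
  | one : Sym
  | star : Sym
deriving DecidableEq

/-- `A` is an arc in `X` joining `x` and `y` (a point if `x = y`, otherwise a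
homeomorphic image of `[0,1]` with endpoints `x` and `y`). -/
def IsArcBetween {X : Type*} [TopologicalSpace X] (A : Set X) (x y : X) : Prop :=
  (x = y ∧ A = {x}) ∨
  (x ≠ y ∧ ∃ γ : Path x y, Topology.IsEmbedding ⇑γ ∧ Set.range ⇑γ = A)

/-- The global arms at `x`: the connected components of `X \ {x}`. -/
def arms {X : Type*} [TopologicalSpace X] (x : X) : Set (Set X) :=
  {C | ∃ y, y ≠ x ∧ C = connectedComponentIn {x}ᶜ y}

/-- The global arm at `x` containing `y` (for `y ≠ x`): the component of `X \ {x}`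
containing `y`.  Local arms at `x` being germs of global arms, we represent the local
arm at `x` pointing towards `y` by this set. -/
def armTo {X : Type*} [TopologicalSpace X] (x y : X) : Set X :=
  connectedComponentIn {x}ᶜ y

/-- `x` is an endpoint: it has exactly one arm. -/
def IsEndpoint {X : Type*} [TopologicalSpace X] (x : X) : Prop :=
  (arms x).ncard = 1

/-- `x` is a branch point: it has at least three arms. -/
def IsBranchPt {X : Type*} [TopologicalSpace X] (x : X) : Prop :=
  3 ≤ (arms x).ncard

/-- `f` maps the set `A` homeomorphically onto its image. -/
def MapsHomeoOn {X : Type*} [TopologicalSpace X] (f : X → X) (A : Set X) : Prop :=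
  Topology.IsEmbedding (A.restrict f)

/-- `f` is a local homeomorphism onto its image at `x`. -/
def IsLocalHomeoAt {X : Type*} [TopologicalSpace X] (f : X → X) (x : X) : Prop :=
  ∃ U : Set X, IsOpen U ∧ x ∈ U ∧ Topology.IsEmbedding (U.restrict f)

/-- `g` sends the local arm at `x` represented by the global arm `C` to the local
arm at `g x` represented by `C'` (germ condition: some initial piece of `C` at `x`
is mapped into `C'`). -/
def MapsLocalArm {X : Type*} [TopologicalSpace X] (g : X → X) (x : X) (C C' : Set X) : Prop :=
  C ∈ arms x ∧ C' ∈ arms (g x) ∧ ∃ U ∈ nhds x, g '' (C ∩ U) ⊆ C'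

/-- `z` is periodic under `f` with exact period `n`. -/
def ExactPeriod {Y : Type*} (f : Y → Y) (z : Y) (n : ℕ) : Prop :=
  1 ≤ n ∧ f^[n] z = z ∧ ∀ k, 1 ≤ k → k < n → f^[k] z ≠ z

/-- The first return map `f^[n]` of the fixed point `z` of `f^[n]` permutes all the
local arms at `z` transitively in a single cycle. -/
def ArmsTransitive {X : Type*} [TopologicalSpace X] (f : X → X) (n : ℕ) (z : X) : Prop :=
  ∀ C ∈ arms z, ∀ C' ∈ arms z, ∃ j : ℕ, MapsLocalArm (f^[n * j]) z C C'

/-- An (abstract) Hubbard tree: a finite topological tree `X` together with a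
continuous surjection `f` and a critical point `c0`, subject to the axioms of
Bruin–Schleicher. -/
structure HubbardTree (X : Type*) [TopologicalSpace X] : Type _ where
  /-- the dynamics -/
  f : X → X
  /-- the critical point -/
  c0 : X
  compact : CompactSpace X
  t2 : T2Space X
  conn : ConnectedSpace X
  /-- the unique arc `[x,y]` joining two points -/
  arc : X → X → Set X
  arc_isArc : ∀ x y : X, IsArcBetween (arc x y) x y
  arc_unique : ∀ (x y : X) (A : Set X), IsArcBetween A x y → A = arc x y
  -- finiteness of the tree
  arms_finite : ∀ x : X, (arms x).Finite
  branch_finite : Set.Finite {x : X | IsBranchPt x}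
  endpoint_finite : Set.Finite {x : X | IsEndpoint x}
  cont : Continuous f
  surj : Function.Surjective f
  /-- every point has at most two inverse images -/
  two_preimages : ∀ y : X, ∃ a b : X, f ⁻¹' {y} ⊆ {a, b}
  /-- local homeomorphism onto its image away from the critical point -/
  local_homeo : ∀ x : X, x ≠ c0 → IsLocalHomeoAt f x
  /-- all endpoints lie on the critical orbit -/
  endpoints_on_orbit : ∀ x : X, IsEndpoint x → ∃ k : ℕ, f^[k] c0 = x
  /-- the critical point is periodic or preperiodic -/
  crit_preperiodic : ∃ k n : ℕ, 1 ≤ n ∧ f^[k + n] c0 = f^[k] c0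
  /-- the critical point is not fixed -/
  crit_not_fixed : f c0 ≠ c0
  /-- expansivity -/
  expansive : ∀ x y : X, x ≠ y →
    (IsBranchPt x ∨ ∃ k : ℕ, f^[k] c0 = x) →
    (IsBranchPt y ∨ ∃ k : ℕ, f^[k] c0 = y) →
    ∃ n : ℕ, c0 ∈ f^[n] '' (arc x y)

namespace HubbardTree

variable {X : Type*} [TopologicalSpace X] (H : HubbardTree X)

/-- The critical value `c₁ = f(c₀)`. -/
def c1 : X := H.f H.c0

/-- The component `T₁` of `T \ {c₀}` containing the critical value. -/
def T1 : Set X := connectedComponentIn {H.c0}ᶜ H.c1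

open Classical in
/-- The symbol (`0`, `1` or `*`) attached to a point of the tree. -/
noncomputable def symOf (x : X) : Sym :=
  if x = H.c0 then Sym.star else if x ∈ H.T1 then Sym.one else Sym.zero

/-- The itinerary of `x`: a sequence of symbols, 1-indexed (the value at index `0`
is irrelevant); entry `k ≥ 1` is the symbol of `f^[k-1] x`. -/
noncomputable def itin (x : X) : ℕ → Sym :=
  fun k => H.symOf (H.f^[k - 1] x)

/-- The kneading sequence: the itinerary of the critical value (1-indexed). -/
noncomputable def kneading : ℕ → Sym := H.itin H.c1

/-- `z` is the characteristic point of its periodic orbit: `c₁` lies in one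
component of `X \ {z}` while `c₀` and all other points of the orbit lie in a
different component. -/
def IsCharacteristic (z : X) : Prop :=
  ∃ Cv Cz : Set X, Cv ∈ arms z ∧ Cz ∈ arms z ∧ Cv ≠ Cz ∧
    H.c1 ∈ Cv ∧ H.c0 ∈ Cz ∧ ∀ k : ℕ, H.f^[k] z ≠ z → H.f^[k] z ∈ Cz

/-- The first return map fixes the local arm at `z` pointing to the critical point
and permutes all other local arms transitively in a single cycle. -/
def OtherArmsTransitive (n : ℕ) (z : X) : Prop :=
  ∀ C ∈ arms z, C ≠ armTo z H.c0 → ∀ C' ∈ arms z, C' ≠ armTo z H.c0 →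
    ∃ j : ℕ, MapsLocalArm (H.f^[n * j]) z C C'

/-- `z` is the characteristic point of an evil periodic orbit of branch points of
exact period `n`. -/
def IsEvilOrbit (z : X) (n : ℕ) : Prop :=
  ExactPeriod H.f z n ∧ (∀ k : ℕ, IsBranchPt (H.f^[k] z)) ∧
    H.IsCharacteristic z ∧ ¬ ArmsTransitive H.f n z

/-- `x` is precritical with `Step(x) = k`: `k ≥ 1` is minimal with `f^[k] x = c₁`. -/
def Step (x : X) (k : ℕ) : Prop :=
  1 ≤ k ∧ H.f^[k] x = H.c1 ∧ ∀ j, 1 ≤ j → j < k → H.f^[j] x ≠ H.c1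

/-- `x` is the closest precritical point `ζ_k`. -/
def IsClosestPrecritical (x : X) (k : ℕ) : Prop :=
  H.Step x k ∧ ∀ j, 1 ≤ j → j < k → H.c1 ∉ H.f^[j] '' (H.arc H.c1 x)

/-- `x` is the earliest precritical point on the set `A`, with `Step(x) = k`:
it is a precritical point on `A` of minimal Step. -/
def IsEarliestPrecriticalOn (A : Set X) (x : X) (k : ℕ) : Prop :=
  x ∈ A ∧ H.Step x k ∧ ∀ y ∈ A, ∀ j : ℕ, H.Step y j → k ≤ j

/-- Marked points: branch points and points of the critical orbit. -/
def MarkedPt (x : X) : Prop :=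
  IsBranchPt x ∨ ∃ k : ℕ, H.f^[k] H.c0 = x

/-- Two marked points are joined by an edge if the arc between them contains no
further marked point. -/
def IsEdge (x y : X) : Prop :=
  H.MarkedPt x ∧ H.MarkedPt y ∧ x ≠ y ∧
    ∀ w ∈ H.arc x y, H.MarkedPt w → w = x ∨ w = y

/-- Equivalence of Hubbard trees: a bijection between the marked points which
conjugates the dynamics and preserves edges. -/
def Equivalent {Y : Type*} [TopologicalSpace Y] (H' : HubbardTree Y) : Prop :=
  ∃ φ : X → Y,
    (∀ x : X, H.MarkedPt x → H'.MarkedPt (φ x)) ∧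
    (∀ x x' : X, H.MarkedPt x → H.MarkedPt x' → φ x = φ x' → x = x') ∧
    (∀ y : Y, H'.MarkedPt y → ∃ x : X, H.MarkedPt x ∧ φ x = y) ∧
    φ H.c0 = H'.c0 ∧
    (∀ x : X, H.MarkedPt x → φ (H.f x) = H'.f (φ x)) ∧
    (∀ x x' : X, H.MarkedPt x → H.MarkedPt x' →
      (H.IsEdge x x' ↔ H'.IsEdge (φ x) (φ x')))

end HubbardTree

/-! ### Combinatorics of kneading sequences -/

/-- The function `ρ_ν(n) = inf { k > n : ν_k ≠ ν_{k-n} } ∈ ℕ ∪ {∞}` (sequences are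
1-indexed). -/
noncomputable def rho (ν : ℕ → Sym) (n : ℕ) : ℕ∞ :=
  sInf {e : ℕ∞ | ∃ j : ℕ, e = (j : ℕ∞) ∧ n < j ∧ ν j ≠ ν (j - n)}

/-- `RhoOrbit ν k m` means that `m` belongs to the `ρ`-orbit
`k → ρ(k) → ρ(ρ(k)) → ⋯` of `k` (stopped before reaching `∞`). -/
inductive RhoOrbit (ν : ℕ → Sym) : ℕ → ℕ → Prop
  | refl (k : ℕ) : RhoOrbit ν k k
  | step {k m j : ℕ} : RhoOrbit ν k m → rho ν m = (j : ℕ∞) → RhoOrbit ν k j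

/-- `m` occurs in the internal address `1 → ρ(1) → ρ(ρ(1)) → ⋯` of `ν`. -/
def InternalAddress (ν : ℕ → Sym) (m : ℕ) : Prop := RhoOrbit ν 1 m

/-- `ν` is a `*`-periodic kneading sequence of (exact) period `n`:
`ν = overline(1 ν₂ … ν_{n-1} *)`. -/
def StarPeriodic (ν : ℕ → Sym) (n : ℕ) : Prop :=
  2 ≤ n ∧ ν 1 = Sym.one ∧ ν n = Sym.star ∧
    (∀ k, 1 ≤ k → ν (k + n) = ν k) ∧
    (∀ k, 1 ≤ k → k < n → ν k ≠ Sym.star)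

/-- `ν` fails the admissibility condition for period `m`. -/
def FailsAdmissibility (ν : ℕ → Sym) (m : ℕ) : Prop :=
  1 ≤ m ∧
  ¬ InternalAddress ν m ∧
  (∀ k : ℕ, k ∣ m → 1 ≤ k → k < m → rho ν k ≤ (m : ℕ∞)) ∧
  ∃ R r : ℕ, rho ν m = (R : ℕ∞) ∧ 1 ≤ r ∧ r ≤ m ∧ r ≡ R [MOD m] ∧ RhoOrbit ν r m

open Classical in
/-- The number `q(m)` of arms predicted by the kneading sequence, where
`ρ(m) = R < ∞` and `r ∈ {1,…,m}` is congruent to `R` modulo `m`. -/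
noncomputable def qArms (ν : ℕ → Sym) (m R r : ℕ) : ℕ :=
  if RhoOrbit ν r m then (R - r) / m + 1 else (R - r) / m + 2


/-! ### Embeddings into the plane and cyclic order of arms -/

/-- Three points in the plane are in (strictly) counterclockwise position. -/
def Ccw (p q r : ℝ × ℝ) : Prop :=
  0 < (q.1 - p.1) * (r.2 - p.2) - (q.2 - p.2) * (r.1 - p.1)

namespace HubbardTree

variable {X : Type*} [TopologicalSpace X] (H : HubbardTree X)

/-- Under an embedding `φ` of the tree into the plane, `p` is a first exit point of
the arm `C` at `x` through the circle of radius `ε` around `φ x`: `p = φ y` for a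
point `y ∈ C` at distance exactly `ε`, such that the arc from `x` to `y` stays
within distance `< ε` before reaching `y`. -/
def ExitPt (φ : X → ℝ × ℝ) (x : X) (C : Set X) (ε : ℝ) (p : ℝ × ℝ) : Prop :=
  ∃ y ∈ C, φ y = p ∧ dist (φ x) p = ε ∧
    ∀ z ∈ H.arc x y, z ≠ y → dist (φ x) (φ z) < ε

/-- The local arms at `x` represented by the arms `C, C', C''` are in
counterclockwise cyclic order under the embedding `φ`. -/
def ArmsCcw (φ : X → ℝ × ℝ) (x : X) (C C' C'' : Set X) : Prop :=
  ∃ ε₀ : ℝ, 0 < ε₀ ∧ ∀ ε : ℝ, 0 < ε → ε < ε₀ →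
    ∀ p p' p'' : ℝ × ℝ, H.ExitPt φ x C ε p → H.ExitPt φ x C' ε p' →
      H.ExitPt φ x C'' ε p'' → Ccw p p' p''

/-- `f` respects the cyclic order (induced by the embedding `φ`) of the local arms
at all branch points. -/
def RespectsCyclicOrder (φ : X → ℝ × ℝ) : Prop :=
  ∀ x : X, IsBranchPt x →
    ∀ C C' C'' : Set X, C ∈ arms x → C' ∈ arms x → C'' ∈ arms x →
      C ≠ C' → C' ≠ C'' → C ≠ C'' → H.ArmsCcw φ x C C' C'' →
      ∀ D D' D'' : Set X, MapsLocalArm H.f x C D → MapsLocalArm H.f x C' D' →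
        MapsLocalArm H.f x C'' D'' → H.ArmsCcw φ (H.f x) D D' D''

/-- The Hubbard tree can be topologically embedded into the plane `ℝ²` so that `f`
respects the cyclic order of the local arms at all branch points. -/
def PlanarEmbeddable : Prop :=
  ∃ φ : X → ℝ × ℝ, Topology.IsEmbedding φ ∧ H.RespectsCyclicOrder φ

end HubbardTree


/-- Tracking of the arc germ at `c_i` towards `c_j`. -/
def germAux (ν : ℕ → Sym) : ℕ → ℕ → ℕ → Sym
  | 0, _, j => ν j
  | t + 1, i, j => if ν i = ν j then germAux ν t (i + 1) (j + 1) else germAux ν t (i + 1) 1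

/-- The symbol at time `n` of the arc germ at `c_i` towards `c_j`. -/
def germ (ν : ℕ → Sym) (n i j : ℕ) : Sym := germAux ν (n - i) i j

theorem germ_top (ν : ℕ → Sym) (n j : ℕ) : germ ν n n j = ν j := by
  simp [germ, germAux]

theorem germ_eq (ν : ℕ → Sym) (n i j : ℕ) (hi : i < n) (h : ν i = ν j) :
    germ ν n i j = germ ν n (i + 1) (j + 1) := by
  obtain ⟨t, ht⟩ : ∃ t, n - i = t + 1 := ⟨n - i - 1, by omega⟩
  have h2 : n - (i + 1) = t := by omega
  simp [germ, ht, h2, germAux, h]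

theorem germ_ne (ν : ℕ → Sym) (n i j : ℕ) (hi : i < n) (h : ν i ≠ ν j) :
    germ ν n i j = germ ν n (i + 1) 1 := by
  obtain ⟨t, ht⟩ : ∃ t, n - i = t + 1 := ⟨n - i - 1, by omega⟩
  have h2 : n - (i + 1) = t := by omega
  simp [germ, ht, h2, germAux, h]

theorem sym_two {a b c : Sym} (ha : a ≠ Sym.star) (hb : b ≠ Sym.star) (hc : c ≠ Sym.star)
    (hab : a ≠ b) : c = a ∨ c = b := by
  cases a <;> cases b <;> cases c <;> simp_all

theorem germ_axiomatic (ν : ℕ → Sym) (n : ℕ) (hs : ν n = Sym.star)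
    (hns : ∀ k, 1 ≤ k → k < n → ν k ≠ Sym.star) :
    ∀ t i j k : ℕ, n - i = t → 1 ≤ i → i ≤ n → 1 ≤ j → j ≤ n → 1 ≤ k → k ≤ n →
      i ≠ j → i ≠ k → j ≠ k → germ ν n i j ≠ germ ν n i k → germ ν n j i = germ ν n j k := by
  intro t
  induction t with
  | zero =>
    intro i j k ht hi hin hj hjn hk hkn hij hik hjk h
    have : i = n := by omega
    subst this
    rw [germ_top, germ_top] at h
    have hj' := hns j hj (by omega)
    rw [germ_ne ν i j i (by omega) (by rw [hs]; exact hj'), germ_ne ν i j k (by omega) h]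
  | succ t ih =>
    intro i j k ht hi hin hj hjn hk hkn hij hik hjk h
    have hi' := hns i hi (by omega)
    rcases Nat.lt_or_ge j n with hjlt | hjge
    · have hj' := hns j hj hjlt
      by_cases e : ν i = ν j
      · have e1 := germ_eq ν n i j (by omega) e
        have e2 := germ_eq ν n j i hjlt e.symm
        by_cases f : ν i = ν k
        · have hk' : k < n := by
            rcases Nat.lt_or_ge k n with h1 | h1
            · exact h1
            · have : k = n := by omega
              rw [this, hs] at f
              exact absurd f hi'
          rw [e1, germ_eq ν n i k (by omega) f] at h
          rw [e2, germ_eq ν n j k hjlt (e.symm.trans f)]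
          exact ih _ _ _ (by omega) (by omega) (by omega) (by omega) (by omega) (by omega)
            (by omega) (by omega) (by omega) (by omega) h
        · rw [e1, germ_ne ν n i k (by omega) f] at h
          rw [e2, germ_ne ν n j k hjlt (by rw [← e]; exact f)]
          exact ih _ _ _ (by omega) (by omega) (by omega) (by omega) (by omega) (by omega)
            (by omega) (by omega) (by omega) (by omega) h
      · have e1 := germ_ne ν n i j (by omega) e
        by_cases f : ν i = ν k
        · rw [germ_ne ν n j i hjlt (Ne.symm e),
            germ_ne ν n j k hjlt (by rw [← f]; exact Ne.symm e)]
        · rw [e1, germ_ne ν n i k (by omega) f] at h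
          exact absurd rfl h
    · have : j = n := by omega
      subst this
      rw [germ_top, germ_top]
      by_contra f
      exact h (by rw [germ_ne ν j i j (by omega) (by rw [hs]; exact hi'),
        germ_ne ν j i k (by omega) f])

theorem germ_leaf (ν : ℕ → Sym) (n : ℕ) (hn : 2 ≤ n) (hs : ν n = Sym.star)
    (hns : ∀ k, 1 ≤ k → k < n → ν k ≠ Sym.star) :
    ∃ i, 1 ≤ i ∧ i ≤ n ∧ ∀ j, 1 ≤ j → j ≤ n → j ≠ i → germ ν n i j = germ ν n i 1 := by
  by_contra hcon
  push Not at hcon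
  have ax := fun i j k => germ_axiomatic ν n hs hns (n - i) i j k rfl
  let X := {x : ℕ // x ∈ Finset.Icc 2 n}
  let R : X → X → Prop := fun y x => x.1 ≠ y.1 ∧ germ ν n x.1 1 ≠ germ ν n x.1 y.1
  have asym : ∀ x y : X, R y x → R x y → False := by
    rintro ⟨x, hx⟩ ⟨y, hy⟩ ⟨h1, h2⟩ ⟨h3, h4⟩
    have hx' := Finset.mem_Icc.1 hx
    have hy' := Finset.mem_Icc.1 hy
    dsimp only at h1 h2 h3 h4
    exact h4 (ax x y 1 (by omega) (by omega) (by omega) (by omega) (by omega) (by omega)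
      h1 (by omega) (by omega) h2.symm).symm
  have : IsTrans X R := by
    constructor
    intro z y x hzy hyx
    have as1 := asym x y hyx
    obtain ⟨x, hx⟩ := x
    obtain ⟨y, hy⟩ := y
    obtain ⟨z, hz⟩ := z
    have hxz : x ≠ z := by
      rintro rfl
      exact as1 hzy
    obtain ⟨h1, h2⟩ := hyx
    obtain ⟨h3, h4⟩ := hzy
    have hx' := Finset.mem_Icc.1 hx
    have hy' := Finset.mem_Icc.1 hy
    have hz' := Finset.mem_Icc.1 hz
    dsimp only at h1 h2 h3 h4
    have h5 : germ ν n y 1 = germ ν n y x := (ax x y 1 (by omega) (by omega) (by omega) (by omega)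
      (by omega) (by omega) h1 (by omega) (by omega) h2.symm).symm
    have h6 := ax y x z (by omega) (by omega) (by omega) (by omega) (by omega) (by omega)
      (Ne.symm h1) h3 hxz (by rw [← h5]; exact h4)
    exact ⟨hxz, by rw [← h6]; exact h2⟩
  have : Std.Irrefl R := ⟨fun x h => h.1 rfl⟩
  have : Finite X := inferInstanceAs (Finite (Finset.Icc 2 n))
  have wf : WellFounded R := Finite.wellFounded_of_trans_of_irrefl R
  obtain ⟨m, -, hm⟩ := wf.has_min Set.univ ⟨⟨2, by simp [hn]⟩, trivial⟩
  obtain ⟨m, hmm⟩ := m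
  have hmm' := Finset.mem_Icc.1 hmm
  obtain ⟨j, hj1, hj2, hj3, hj4⟩ := hcon m (by omega) (by omega)
  have hj5 : j ≠ 1 := by
    rintro rfl
    exact hj4 rfl
  exact hm ⟨j, Finset.mem_Icc.2 ⟨by omega, hj2⟩⟩ trivial ⟨hj3.symm, hj4.symm⟩

theorem germ_const (ν : ℕ → Sym) (n : ℕ) (hn : 2 ≤ n) (hs : ν n = Sym.star)
    (hns : ∀ k, 1 ≤ k → k < n → ν k ≠ Sym.star) (j k : ℕ) (hj : 2 ≤ j) (hjn : j ≤ n)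
    (hk : 2 ≤ k) (hkn : k ≤ n) : germ ν n 1 j = germ ν n 1 k := by
  by_contra hcon
  have step : ∀ i j, 1 ≤ i → i < n → 1 ≤ j → j ≤ n → j ≠ i → ∃ j', 1 ≤ j' ∧ j' ≤ n ∧
      j' ≠ i + 1 ∧ germ ν n i j = germ ν n (i + 1) j' := by
    intro i j hi hin hj hjn hij
    by_cases e : ν i = ν j
    · have : j ≠ n := by
        rintro rfl
        exact hns i hi hin (e.trans hs)
      exact ⟨j + 1, by omega, by omega, by omega, germ_eq ν n i j hin e⟩
    · exact ⟨1, by omega, by omega, by omega, germ_ne ν n i j hin e⟩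
  have key : ∀ i, 1 ≤ i → i ≤ n → ∃ j k, 1 ≤ j ∧ j ≤ n ∧ j ≠ i ∧ 1 ≤ k ∧ k ≤ n ∧ k ≠ i ∧
      germ ν n i j ≠ germ ν n i k := by
    intro i hi
    induction i, hi using Nat.le_induction with
    | base => exact fun _ => ⟨j, k, by omega, hjn, by omega, by omega, hkn, by omega, hcon⟩
    | succ i hi ih =>
      intro hin
      obtain ⟨j, k, h1, h2, h3, h4, h5, h6, h7⟩ := ih (by omega)
      obtain ⟨j', a1, a2, a3, a4⟩ := step i j hi (by omega) h1 h2 h3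
      obtain ⟨k', b1, b2, b3, b4⟩ := step i k hi (by omega) h4 h5 h6
      exact ⟨j', k', a1, a2, a3, b1, b2, b3, by rw [← a4, ← b4]; exact h7⟩
  obtain ⟨i, hi, hin, hleaf⟩ := germ_leaf ν n hn hs hns
  obtain ⟨j, k, h1, h2, h3, h4, h5, h6, h7⟩ := key i hi hin
  exact h7 ((hleaf j h1 h2 h3).trans (hleaf k h4 h5 h6).symm)

theorem germ_run (ν : ℕ → Sym) (n i j : ℕ) : ∀ d, i + d ≤ n →
    (∀ e, e < d → ν (i + e) = ν (j + e)) → germ ν n i j = germ ν n (i + d) (j + d) := by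
  intro d
  induction d with
  | zero => intro _ _; rfl
  | succ d ih =>
    intro hd h
    rw [ih (by omega) (fun e he => h e (by omega)),
      germ_eq ν n (i + d) (j + d) (by omega) (h d (by omega))]
    rfl

theorem rho_spec (τ : ℕ → Sym) (m j : ℕ) (h : rho τ m = (j : ℕ∞)) :
    m < j ∧ τ j ≠ τ (j - m) ∧ ∀ i, m < i → i < j → τ i = τ (i - m) := by
  have hne : {e : ℕ∞ | ∃ j : ℕ, e = (j : ℕ∞) ∧ m < j ∧ τ j ≠ τ (j - m)}.Nonempty := by
    by_contra hc
    rw [Set.not_nonempty_iff_eq_empty] at hc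
    unfold rho at h
    rw [hc, sInf_empty] at h
    exact absurd h.symm (ENat.natCast_ne_top j)
  have hmem := csInf_mem hne
  change rho τ m ∈ _ at hmem
  rw [h] at hmem
  obtain ⟨j', e, h1, h2⟩ := hmem
  have e' : j = j' := by exact_mod_cast e
  subst e'
  refine ⟨h1, h2, fun i hi hij => ?_⟩
  by_contra hc
  have : rho τ m ≤ (i : ℕ∞) := sInf_le ⟨i, rfl, hi, hc⟩
  rw [h] at this
  have : j ≤ i := by exact_mod_cast this
  omega

theorem germ_orbit (ν τ : ℕ → Sym) (n : ℕ) (hn : 2 ≤ n)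
    (hτ : ∀ k, 1 ≤ k → k < n → τ k = ν k) (m : ℕ) (h : InternalAddress τ m) :
    1 ≤ m ∧ (m < n → germ ν n (m + 1) 1 = germ ν n 2 1) ∧ (m = n → germ ν n 2 1 ≠ τ n) := by
  unfold InternalAddress at h
  induction h with
  | refl =>
    exact ⟨le_refl _, fun _ => rfl, fun h => by omega⟩
  | @step m j hm hr ih =>
    obtain ⟨h1, h2, -⟩ := ih
    obtain ⟨a1, a2, a3⟩ := rho_spec _ _ _ hr
    have run : j ≤ n → germ ν n 2 1 = germ ν n j (j - m) := by
      intro hj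
      rw [← h2 (by omega), germ_run ν n (m + 1) 1 (j - m - 1) (by omega)]
      · congr 1 <;> omega
      · intro e he
        rw [← hτ _ (by omega) (by omega), ← hτ _ (by omega) (by omega),
          a3 _ (by omega) (by omega)]
        congr 1
        omega
    refine ⟨by omega, fun hj => ?_, fun hj => ?_⟩
    · rw [run (by omega), germ_ne ν n j (j - m) hj]
      rw [← hτ _ (by omega) (by omega), ← hτ _ (by omega) (by omega)]
      exact a2
    · rw [run (by omega)]
      subst hj
      rw [germ_top, ← hτ _ (by omega) (by omega)]
      exact a2.symm

/-- Proposition 5.19, "Exact Period of Kneading Sequence".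
For every `*`-periodic kneading sequence `ν` of exact period `n`, the associated
upper kneading sequence `A(ν)` has exact period `n`: among the two sequences
obtained from `ν` by replacing every `*` consistently by `0` or by `1`, the one
whose internal address contains `n` has exact period `n`. -/
theorem exact_period_of_upper_kneading_sequence
    (ν : ℕ → Sym) (n : ℕ) (hν : StarPeriodic ν n) :
    ∀ τ : ℕ → Sym,
      ((∀ k : ℕ, 1 ≤ k →
          ((ν k = Sym.star ∧ τ k = Sym.zero) ∨ (ν k ≠ Sym.star ∧ τ k = ν k))) ∨
       (∀ k : ℕ, 1 ≤ k →
          ((ν k = Sym.star ∧ τ k = Sym.one) ∨ (ν k ≠ Sym.star ∧ τ k = ν k)))) →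
      InternalAddress τ n →
      ((∀ k : ℕ, 1 ≤ k → τ (k + n) = τ k) ∧
        ∀ p : ℕ, 1 ≤ p → (∀ k : ℕ, 1 ≤ k → τ (k + p) = τ k) → n ≤ p) := by
  obtain ⟨hn, h1, hs, hper, hns⟩ := hν
  intro τ hcase hIA
  have hper' : ∀ k : ℕ, 1 ≤ k → τ (k + n) = τ k := by
    intro k hk
    rcases hcase with h | h
    · have a := h k hk
      have b := h (k + n) (by omega)
      rw [hper k hk] at b
      grind
    · have a := h k hk
      have b := h (k + n) (by omega)
      rw [hper k hk] at b
      grind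
  have hτ : ∀ k, 1 ≤ k → k < n → τ k = ν k := by
    intro k hk hkn
    have := hns k hk hkn
    rcases hcase with h | h
    · have a := h k hk
      grind
    · have a := h k hk
      grind
  refine ⟨hper', fun p hp hpp => ?_⟩
  by_contra hlt
  have hlt : p < n := by omega
  have hlast := (germ_orbit ν τ n hn hτ n hIA).2.2 rfl
  apply hlast
  have e1 : germ ν n 1 n = germ ν n 2 1 :=
    germ_ne ν n 1 n (by omega) (by rw [h1, hs]; decide)
  rw [← e1, germ_const ν n hn hs hns n (p + 1) hn le_rfl (by omega) (by omega),
    germ_run ν n 1 (p + 1) (n - p - 1) (by omega)]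
  · have e2 : 1 + (n - p - 1) = n - p := by omega
    have e3 : p + 1 + (n - p - 1) = n := by omega
    rw [e2, e3, germ_ne ν n (n - p) n (by omega)
      (by rw [hs]; exact hns _ (by omega) (by omega)),
      germ_run ν n (n - p + 1) 1 (p - 1) (by omega)]
    · have e4 : n - p + 1 + (p - 1) = n := by omega
      have e5 : 1 + (p - 1) = p := by omega
      rw [e4, e5, germ_top, ← hτ p hp hlt, ← hper' p hp, Nat.add_comm, hpp n (by omega)]
    · intro e he
      rw [← hτ _ (by omega) (by omega), ← hτ _ (by omega) (by omega),
        ← hpp _ (by omega), ← hper' (1 + e) (by omega)]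
      congr 1
      omega
  · intro e he
    rw [← hτ _ (by omega) (by omega), ← hτ _ (by omega) (by omega), ← hpp _ (by omega)]
    congr 1
    omega

end HubbardTrees
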